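/- Let A ∈ ℝ^{n×p} satisfy the restricted isometry property of order 2k with constant δ_{2k} < 1. Then for every h in the null space of A and every index set S ⊆ {1,…,p} with |S| ≤ k, ‖h_S‖₁ ≤ θ_{2k}·‖h_{S̄}‖₁, where θ_{2k} = sqrt(4(1 + 5δ_{2k} − 4δ_{2k}²)/((1 − δ_{2k})(32 − 25δ_{2k}))). -/

import Mathlib

/-!
Let `α = ‖h_{S̄}‖₁ / m`, where the order of the isometry property is at least `|S| + m`. Let `w`
collect the entries of `h` on `S` and the `l` entries off `S` larger than `α`, and let `v = h - w`.
Then `‖v‖_∞ ≤ α` and `‖v‖₁ ≤ (m - l) α`. These two bounds cut out a polytope with `(m - l)`-sparse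
extreme points (Cai and Zhang), so some `(m - l)`-sparse `u` in it, vanishing where `v` does,
satisfies `⟪A w, A u⟫ ≤ ⟪A w, A v⟫`, whence `⟪A w, A (w + u)⟫ ≤ ⟪A w, A h⟫ = 0`. On the other hand
`2 ⟪A w, A (w + u)⟫ ≥ (1 - δ²) ‖w‖₂² - δ² ‖u‖₂²` by polarization and the isometry property. So
`(1 - δ²) ‖h_S‖₂² ≤ (1 - δ²) ‖w‖₂² ≤ δ² ‖u‖₂² ≤ δ² m α²`, and for `|S| ≤ m` Cauchy-Schwarz turns
this into the null space property with the constant `δ / √(1 - δ²) ≤ θ`.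
-/

open Finset

/-- Restriction of a vector to an index set `S` (zero outside `S`). -/
def restr {p : ℕ} (x : Fin p → ℝ) (S : Finset (Fin p)) : Fin p → ℝ :=
  fun i => if i ∈ S then x i else 0

/-- The ℓ¹ norm. -/
noncomputable def l1 {p : ℕ} (x : Fin p → ℝ) : ℝ := ∑ i, |x i|

/-- The ℓ² norm. -/
noncomputable def l2 {p : ℕ} (x : Fin p → ℝ) : ℝ := Real.sqrt (∑ i, (x i) ^ 2)

/-- `x` is `k`-sparse: its support fits inside a set of at most `k` indices. -/
def Sparse {p : ℕ} (k : ℕ) (x : Fin p → ℝ) : Prop :=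
  ∃ S : Finset (Fin p), S.card ≤ k ∧ ∀ i, x i ≠ 0 → i ∈ S

/-- `A` satisfies the restricted isometry property of order `k` with constant `δ ∈ [0,1)`. -/
def RIP {n p : ℕ} (A : Matrix (Fin n) (Fin p) ℝ) (k : ℕ) (δ : ℝ) : Prop :=
  0 ≤ δ ∧ δ < 1 ∧ ∀ x : Fin p → ℝ, Sparse k x →
    (1 - δ) * (l2 x) ^ 2 ≤ (l2 (A.mulVec x)) ^ 2 ∧
    (l2 (A.mulVec x)) ^ 2 ≤ (1 + δ) * (l2 x) ^ 2

section LinearProgramming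

variable {ι R : Type*} [Fintype ι]

lemma exists_card_eq_forall_le_forall_notMem [LinearOrder R] (c : ι → R) {s : ℕ}
    (hs : s ≤ Fintype.card ι) : ∃ B : Finset ι, #B = s ∧ ∀ i ∈ B, ∀ j ∉ B, c i ≤ c j := by
  classical
  induction s with
  | zero => exact ⟨∅, by simp⟩
  | succ s ih =>
    obtain ⟨B, rfl, hB⟩ := ih (by omega)
    obtain ⟨a, ha, hmin⟩ := exists_min_image Bᶜ c (card_pos.1 (by rw [card_compl]; omega))
    refine ⟨insert a B, card_insert_of_notMem (mem_compl.1 ha), fun i hi j hj => ?_⟩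
    rw [mem_insert, not_or] at hj
    rcases mem_insert.1 hi with rfl | hi
    · exact hmin j (mem_compl.2 hj.2)
    · exact hB i hi j hj.2

variable [CommRing R] [LinearOrder R] [IsStrictOrderedRing R]

lemma sum_le_sum_mul_of_threshold {c x : ι → R} {B : Finset ι} {τ : R} (hx0 : ∀ i, 0 ≤ x i)
    (hx1 : ∀ i, x i ≤ 1) (hB : ∀ i ∈ B, c i ≤ τ) (hBc : ∀ i ∉ B, τ ≤ c i)
    (hτ : τ * #B ≤ τ * ∑ i, x i) : ∑ i ∈ B, c i ≤ ∑ i, c i * x i := by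
  classical
  have hterm : ∀ i, 0 ≤ (c i - τ) * (x i - if i ∈ B then 1 else 0) := fun i => by
    split_ifs with hi
    · exact mul_nonneg_of_nonpos_of_nonpos (sub_nonpos.2 (hB i hi)) (sub_nonpos.2 (hx1 i))
    · exact mul_nonneg (sub_nonneg.2 (hBc i hi)) (by simpa using hx0 i)
  have hsum : ∑ i, (c i - τ) * (x i - if i ∈ B then 1 else 0) =
      (∑ i, c i * x i - ∑ i ∈ B, c i) - (τ * ∑ i, x i - τ * #B) := by
    simp only [sub_mul, mul_sub, mul_ite, mul_one, mul_zero, sum_sub_distrib, sum_ite_mem,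
      univ_inter, mul_sum, sum_const, nsmul_eq_mul, mul_comm τ (#B : R)]
    ring
  have hnonneg := sum_nonneg fun i (_ : i ∈ univ) => hterm i
  linarith

lemma exists_card_le_sum_le_sum_mul {c x : ι → R} {s : ℕ} (hx0 : ∀ i, 0 ≤ x i)
    (hx1 : ∀ i, x i ≤ 1) (hxs : ∑ i, x i ≤ s) :
    ∃ B : Finset ι, #B ≤ s ∧ ∑ i ∈ B, c i ≤ ∑ i, c i * x i := by
  classical
  set N : Finset ι := {i | c i < 0} with hN
  by_cases hNs : #N ≤ s
  · exact ⟨N, hNs, sum_le_sum_mul_of_threshold (τ := 0) hx0 hx1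
      (fun i hi => (mem_filter.1 hi).2.le) (fun i hi => by simpa [hN] using hi) (by simp)⟩
  rw [not_le] at hNs
  obtain ⟨B, rfl, hB⟩ := exists_card_eq_forall_le_forall_notMem c (hNs.le.trans (card_le_univ N))
  obtain ⟨j, hjN, hjB⟩ := exists_mem_notMem_of_card_lt_card hNs
  obtain ⟨a, ha, hmin⟩ := exists_min_image Bᶜ c ⟨j, mem_compl.2 hjB⟩
  have ha0 : c a ≤ 0 := (hmin j (mem_compl.2 hjB)).trans (mem_filter.1 hjN).2.le
  exact ⟨B, le_rfl, sum_le_sum_mul_of_threshold hx0 hx1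
    (fun i hi => hB i hi a (mem_compl.1 ha)) (fun i hi => hmin i (mem_compl.2 hi))
    (mul_le_mul_of_nonpos_left hxs ha0)⟩

end LinearProgramming

section Norms

variable {p : ℕ} (x : Fin p → ℝ) {S T : Finset (Fin p)}

lemma l1_nonneg : 0 ≤ l1 x := sum_nonneg fun _ _ => abs_nonneg _

lemma l2_nonneg : 0 ≤ l2 x := Real.sqrt_nonneg _

lemma l2_sq : l2 x ^ 2 = x ⬝ᵥ x := by
  rw [l2, Real.sq_sqrt (sum_nonneg fun i _ => sq_nonneg (x i))]
  simp only [dotProduct, sq]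

lemma restr_apply_of_mem {i : Fin p} (hi : i ∈ S) : restr x S i = x i := if_pos hi

lemma restr_apply_of_notMem {i : Fin p} (hi : i ∉ S) : restr x S i = 0 := if_neg hi

lemma restr_restr : restr (restr x S) T = restr x (S ∩ T) := by
  funext i
  by_cases hS : i ∈ S <;> by_cases hT : i ∈ T <;> simp [restr, hS, hT]

lemma restr_add_restr_compl : restr x S + restr x Sᶜ = x := by
  funext i
  by_cases hi : i ∈ S <;> simp [restr, hi]

lemma restr_eq_zero_or_restr_compl_eq_zero (i : Fin p) : restr x S i = 0 ∨ restr x Sᶜ i = 0 :=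
  (em (i ∈ S)).symm.imp (restr_apply_of_notMem x)
    fun hi => restr_apply_of_notMem x (notMem_compl.2 hi)

lemma l1_restr : l1 (restr x S) = ∑ i ∈ S, |x i| := by
  simp [l1, restr, apply_ite abs]

lemma l2_restr_mono (hST : S ⊆ T) : l2 (restr x S) ≤ l2 (restr x T) := by
  refine Real.sqrt_le_sqrt (sum_le_sum fun i _ => ?_)
  by_cases hi : i ∈ S
  · rw [restr_apply_of_mem x hi, restr_apply_of_mem x (hST hi)]
  · rw [restr_apply_of_notMem x hi, zero_pow two_ne_zero]
    exact sq_nonneg _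

end Norms

section Sparse

variable {p s t : ℕ} {x y : Fin p → ℝ} {α : ℝ}

lemma sparse_restr (x : Fin p → ℝ) (S : Finset (Fin p)) : Sparse #S (restr x S) :=
  ⟨S, le_rfl, fun _ hi => of_not_not fun hiS => hi (restr_apply_of_notMem x hiS)⟩

lemma Sparse.mono (hx : Sparse s x) (hst : s ≤ t) : Sparse t x :=
  let ⟨S, hS, hxS⟩ := hx
  ⟨S, hS.trans hst, hxS⟩

lemma Sparse.smul (hx : Sparse s x) (a : ℝ) : Sparse s (a • x) :=
  let ⟨S, hS, hxS⟩ := hx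
  ⟨S, hS, fun i hi => hxS i (right_ne_zero_of_mul hi)⟩

lemma Sparse.add (hx : Sparse s x) (hy : Sparse t y) : Sparse (s + t) (x + y) := by
  obtain ⟨S, hS, hxS⟩ := hx
  obtain ⟨T, hT, hyT⟩ := hy
  refine ⟨S ∪ T, (card_union_le S T).trans (add_le_add hS hT), fun i hi => mem_union.2 ?_⟩
  by_contra! hST
  have hxi : x i = 0 := of_not_not (mt (hxS i) hST.1)
  have hyi : y i = 0 := of_not_not (mt (hyT i) hST.2)
  exact hi (by rw [Pi.add_apply, hxi, hyi, add_zero])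

lemma Sparse.l1_le_sqrt_mul_l2 (hx : Sparse s x) : l1 x ≤ √s * l2 x := by
  obtain ⟨S, hS, hxS⟩ := hx
  have hl1 : l1 x = ∑ i ∈ S, |x i| :=
    (sum_subset (subset_univ S) fun i _ hi => abs_eq_zero.2 (of_not_not (mt (hxS i) hi))).symm
  rw [l2, ← Real.sqrt_mul (Nat.cast_nonneg s)]
  refine Real.le_sqrt_of_sq_le ?_
  calc l1 x ^ 2 ≤ #S * ∑ i ∈ S, |x i| ^ 2 := hl1 ▸ sq_sum_le_card_mul_sum_sq
    _ ≤ s * ∑ i, x i ^ 2 := by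
      simp only [sq_abs]
      gcongr
      exact subset_univ S

lemma Sparse.l2_sq_le (hx : Sparse s x) (hxα : ∀ i, |x i| ≤ α) : l2 x ^ 2 ≤ s * α ^ 2 := by
  obtain ⟨S, hS, hxS⟩ := hx
  rw [l2, Real.sq_sqrt (sum_nonneg fun i _ => sq_nonneg (x i))]
  calc ∑ i, x i ^ 2 = ∑ i ∈ S, x i ^ 2 :=
        (sum_subset (subset_univ S) fun i _ hi => by
          rw [of_not_not (mt (hxS i) hi), zero_pow two_ne_zero]).symm
    _ ≤ #S • α ^ 2 := sum_le_card_nsmul S _ _ fun i _ => sq_le_sq' (abs_le.1 (hxα i)).1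
        (abs_le.1 (hxα i)).2
    _ ≤ s * α ^ 2 := by
      rw [nsmul_eq_mul]
      gcongr

lemma exists_sparse_dotProduct_le (y : Fin p → ℝ) (hα : 0 ≤ α) (hxα : ∀ i, |x i| ≤ α)
    (hxs : l1 x ≤ s * α) :
    ∃ u, Sparse s u ∧ (∀ i, |u i| ≤ α) ∧ (∀ i, x i = 0 → u i = 0) ∧ y ⬝ᵥ u ≤ y ⬝ᵥ x := by
  obtain ⟨B, hBs, hB⟩ := exists_card_le_sum_le_sum_mul
    (c := fun i => y i * (α * SignType.sign (x i))) (x := fun i => |x i| / α)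
    (fun i => div_nonneg (abs_nonneg _) hα) (fun i => div_le_one_of_le₀ (hxα i) hα)
    (by rw [← sum_div]; exact div_le_of_le_mul₀ hα (Nat.cast_nonneg s) hxs)
  have hsign : ∀ i, α * SignType.sign (x i) * (|x i| / α) = x i := fun i => by
    have hcancel : α * (|x i| / α) = |x i| :=
      mul_div_cancel_of_imp' fun h0 => le_antisymm (h0 ▸ hxα i) (abs_nonneg _)
    rw [mul_right_comm, hcancel, mul_comm, sign_mul_abs]
  refine ⟨restr (fun i => α * SignType.sign (x i)) B, (sparse_restr _ B).mono hBs, fun i => ?_,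
    fun i hi => by simp [restr, hi], ?_⟩
  · unfold restr
    split_ifs
    · rcases lt_trichotomy (x i) 0 with hi | hi | hi <;> simp [hi, abs_of_nonneg hα, hα]
    · rwa [abs_zero]
  · calc y ⬝ᵥ restr (fun i => α * SignType.sign (x i)) B
        = ∑ i ∈ B, y i * (α * SignType.sign (x i)) := by simp [dotProduct, restr]
      _ ≤ ∑ i, y i * (α * SignType.sign (x i)) * (|x i| / α) := hB
      _ = y ⬝ᵥ x := sum_congr rfl fun i _ => by rw [mul_assoc, hsign]

lemma exists_card_le_l1_restr_compl_le (hα : 0 ≤ α) (hx : l1 x ≤ s * α) :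
    ∃ L : Finset (Fin p), #L ≤ s ∧ (∀ i ∉ L, |x i| ≤ α) ∧
      l1 (restr x Lᶜ) ≤ (s - #L : ℕ) * α := by
  set L : Finset (Fin p) := {i | α < |x i|} with hL
  have hsplit : ∑ i ∈ L, |x i| + l1 (restr x Lᶜ) = l1 x := by
    rw [l1_restr, sum_add_sum_compl, l1]
  have hLs : #L ≤ s := by
    by_contra! hlt
    have hlarge : #L • α < ∑ i ∈ L, |x i| := by
      rw [← sum_const]
      exact sum_lt_sum_of_nonempty (card_pos.1 (by omega)) fun i hi => (mem_filter.1 hi).2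
    have hcard : s * α ≤ #L * α := by gcongr
    rw [nsmul_eq_mul] at hlarge
    linarith [l1_nonneg (restr x Lᶜ)]
  refine ⟨L, hLs, fun i hi => by simpa [hL] using hi, ?_⟩
  have hlarge : #L • α ≤ ∑ i ∈ L, |x i| :=
    card_nsmul_le_sum L _ _ fun i hi => (mem_filter.1 hi).2.le
  rw [nsmul_eq_mul] at hlarge
  rw [Nat.cast_sub hLs]
  linarith

end Sparse

namespace RIP

variable {n p K s t m : ℕ} {A : Matrix (Fin n) (Fin p) ℝ} {δ α : ℝ} {w u v h : Fin p → ℝ}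
  {S : Finset (Fin p)}

/-- The restricted isometry property applied to `w ± a (w + u)`. -/
lemma sub_le_two_mul_dotProduct_mulVec (hRIP : RIP A K δ) (hw : Sparse s w) (hu : Sparse t u)
    (hst : s + t ≤ K) (hwu : w ⬝ᵥ u = 0) (a : ℝ) :
    (2 * a - δ * (1 + a ^ 2)) * l2 w ^ 2 - δ * a ^ 2 * l2 u ^ 2 ≤
      2 * a * (A.mulVec w ⬝ᵥ A.mulVec (w + u)) := by
  have hsparse : ∀ b c : ℝ, Sparse K (b • w + c • u) := fun b c =>
    ((hw.smul b).add (hu.smul c)).mono hst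
  have hnorm : ∀ b c : ℝ, l2 (b • w + c • u) ^ 2 = b ^ 2 * l2 w ^ 2 + c ^ 2 * l2 u ^ 2 := by
    intro b c
    simp only [l2_sq, dotProduct_add, add_dotProduct, smul_dotProduct, dotProduct_smul,
      smul_eq_mul, hwu, dotProduct_comm u w]
    ring
  have hpolar : l2 (A.mulVec ((1 + a) • w + a • u)) ^ 2 -
      l2 (A.mulVec ((1 - a) • w + (-a) • u)) ^ 2 =
        4 * a * (A.mulVec w ⬝ᵥ A.mulVec (w + u)) := by
    simp only [l2_sq, Matrix.mulVec_add, Matrix.mulVec_smul, dotProduct_add, add_dotProduct,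
      smul_dotProduct, dotProduct_smul, smul_eq_mul, dotProduct_comm (A.mulVec u) (A.mulVec w)]
    ring
  have hlower := (hRIP.2.2 _ (hsparse (1 + a) a)).1
  have hupper := (hRIP.2.2 _ (hsparse (1 - a) (-a))).2
  rw [hnorm] at hlower hupper
  linarith

lemma one_sub_sq_mul_l2_sq_sub_le (hRIP : RIP A K δ) (hw : Sparse s w) (hu : Sparse t u)
    (hst : s + t ≤ K) (hwu : w ⬝ᵥ u = 0) :
    (1 - δ ^ 2) * l2 w ^ 2 - δ ^ 2 * l2 u ^ 2 ≤ 2 * (A.mulVec w ⬝ᵥ A.mulVec (w + u)) := by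
  have hpolar := hRIP.sub_le_two_mul_dotProduct_mulVec hw hu hst hwu
  rcases hRIP.1.eq_or_lt with rfl | hδ
  · linarith [hpolar 1, sq_nonneg (l2 w)]
  · refine le_of_mul_le_mul_left ?_ hδ
    linarith [hpolar δ]

lemma one_sub_sq_mul_l2_sq_le (hRIP : RIP A K δ) (hw : Sparse s w) (hα : 0 ≤ α)
    (hvα : ∀ i, |v i| ≤ α) (hv : l1 v ≤ t * α) (hst : s + t ≤ K)
    (hdisj : ∀ i, w i = 0 ∨ v i = 0) (hA : A.mulVec (w + v) = 0) :
    (1 - δ ^ 2) * l2 w ^ 2 ≤ δ ^ 2 * (t * α ^ 2) := by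
  obtain ⟨u, hut, huα, hu0, hle⟩ :=
    exists_sparse_dotProduct_le (Matrix.vecMul (A.mulVec w) A) hα hvα hv
  have hwu : w ⬝ᵥ u = 0 := sum_eq_zero fun i _ =>
    mul_eq_zero.2 ((hdisj i).imp_right (hu0 i))
  have hnonpos : A.mulVec w ⬝ᵥ A.mulVec (w + u) ≤ 0 := by
    rw [← Matrix.dotProduct_mulVec, ← Matrix.dotProduct_mulVec] at hle
    calc A.mulVec w ⬝ᵥ A.mulVec (w + u) ≤ A.mulVec w ⬝ᵥ A.mulVec (w + v) := by
          simpa only [Matrix.mulVec_add, dotProduct_add, add_le_add_iff_left] using hle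
      _ = 0 := by rw [hA, dotProduct_zero]
  have hu2 : δ ^ 2 * l2 u ^ 2 ≤ δ ^ 2 * (t * α ^ 2) := by
    gcongr
    exact hut.l2_sq_le huα
  linarith [hRIP.one_sub_sq_mul_l2_sq_sub_le hw hut hst hwu]

lemma one_sub_sq_mul_l2_restr_sq_le (hRIP : RIP A K δ) (hα : 0 ≤ α) (hK : #S + m ≤ K)
    (hA : A.mulVec h = 0) (hh : l1 (restr h Sᶜ) ≤ m * α) :
    (1 - δ ^ 2) * l2 (restr h S) ^ 2 ≤ δ ^ 2 * (m * α ^ 2) := by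
  obtain ⟨L, hLm, hLα, hL1⟩ := exists_card_le_l1_restr_compl_le hα hh
  rw [restr_restr, ← compl_union] at hL1
  have hδ : 0 ≤ 1 - δ ^ 2 := sub_nonneg.2 (pow_le_one₀ hRIP.1 hRIP.2.1.le)
  have hcard : #(S ∪ L) + (m - #L) ≤ K := by
    have := card_union_le S L
    omega
  have hflat : ∀ i, |restr h (S ∪ L)ᶜ i| ≤ α := fun i => by
    by_cases hi : i ∈ S ∪ L
    · rwa [restr_apply_of_notMem h (notMem_compl.2 hi), abs_zero]
    · rw [compl_union, ← restr_restr,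
        restr_apply_of_mem _ (mem_compl.2 fun hL => hi (mem_union_right S hL))]
      exact hLα i fun hL => hi (mem_union_right S hL)
  calc (1 - δ ^ 2) * l2 (restr h S) ^ 2 ≤ (1 - δ ^ 2) * l2 (restr h (S ∪ L)) ^ 2 := by
        gcongr
        · exact l2_nonneg _
        · exact l2_restr_mono h subset_union_left
    _ ≤ δ ^ 2 * ((m - #L : ℕ) * α ^ 2) :=
        hRIP.one_sub_sq_mul_l2_sq_le (sparse_restr h _) hα hflat hL1 hcard
          (restr_eq_zero_or_restr_compl_eq_zero h)
          (by rwa [restr_add_restr_compl])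
    _ ≤ δ ^ 2 * (m * α ^ 2) := by
        gcongr
        exact Nat.sub_le _ _

lemma sqrt_mul_l2_restr_le (hRIP : RIP A K δ) (hK : #S + m ≤ K) (hA : A.mulVec h = 0) :
    √m * l2 (restr h S) ≤ δ / √(1 - δ ^ 2) * l1 (restr h Sᶜ) := by
  have hδ : 0 < 1 - δ ^ 2 := sub_pos.2 (pow_lt_one₀ hRIP.1 hRIP.2.1 two_ne_zero)
  have hb := l1_nonneg (restr h Sᶜ)
  have hrhs : 0 ≤ δ * l1 (restr h Sᶜ) := mul_nonneg hRIP.1 hb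
  rw [div_mul_eq_mul_div, le_div_iff₀ (Real.sqrt_pos.2 hδ)]
  rcases m.eq_zero_or_pos with rfl | hm
  · simpa using hrhs
  have hm' : (0 : ℝ) < m := Nat.cast_pos.2 hm
  set b := l1 (restr h Sᶜ)
  have hsq : (1 - δ ^ 2) * l2 (restr h S) ^ 2 ≤ δ ^ 2 * (m * (b / m) ^ 2) :=
    hRIP.one_sub_sq_mul_l2_restr_sq_le (by positivity) hK hA (mul_div_cancel₀ b hm'.ne').ge
  refine le_of_sq_le_sq ?_ hrhs
  calc (√m * l2 (restr h S) * √(1 - δ ^ 2)) ^ 2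
      = m * ((1 - δ ^ 2) * l2 (restr h S) ^ 2) := by
        rw [mul_pow, mul_pow, Real.sq_sqrt hm'.le, Real.sq_sqrt hδ.le]
        ring
    _ ≤ m * (δ ^ 2 * (m * (b / m) ^ 2)) := by gcongr
    _ = (δ * b) ^ 2 := by field_simp

end RIP

lemma div_sqrt_one_sub_sq_le {δ : ℝ} (h0 : 0 ≤ δ) (h1 : δ < 1) :
    δ / √(1 - δ ^ 2) ≤ √(4 * (1 + 5 * δ - 4 * δ ^ 2) / ((1 - δ) * (32 - 25 * δ))) := by
  have hδ : 0 < 1 - δ := sub_pos.2 h1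
  have hδ2 : 0 < 1 - δ ^ 2 := sub_pos.2 (pow_lt_one₀ h0 h1 two_ne_zero)
  have hfactor : 4 * (1 + 5 * δ - 4 * δ ^ 2) * (1 - δ ^ 2) - δ ^ 2 * ((1 - δ) * (32 - 25 * δ)) =
      (1 - δ) * (4 + 24 * δ * (1 - δ) + δ ^ 2 * (9 * δ - 4)) := by ring
  have hcubic : 0 ≤ 4 + 24 * δ * (1 - δ) + δ ^ 2 * (9 * δ - 4) := by
    nlinarith [mul_nonneg h0 hδ.le, pow_nonneg h0 3]
  refine Real.le_sqrt_of_sq_le ?_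
  rw [div_pow, Real.sq_sqrt hδ2.le, div_le_div_iff₀ hδ2 (mul_pos hδ (by linarith))]
  linarith [hfactor, mul_nonneg hδ.le hcubic]

theorem stmt7_general {n p K m : ℕ} {A : Matrix (Fin n) (Fin p) ℝ} {δ c : ℝ} (hRIP : RIP A K δ)
    {h : Fin p → ℝ} (hA : A.mulVec h = 0) {S : Finset (Fin p)} (hK : #S + m ≤ K)
    (hc : #S ≤ c * m) :
    l1 (restr h S) ≤ √c * (δ / √(1 - δ ^ 2)) * l1 (restr h Sᶜ) :=
  calc l1 (restr h S) ≤ √(#S : ℝ) * l2 (restr h S) := (sparse_restr h S).l1_le_sqrt_mul_l2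
    _ ≤ √(c * m) * l2 (restr h S) := by
        gcongr
        exact l2_nonneg _
    _ = √c * (√m * l2 (restr h S)) := by rw [Real.sqrt_mul' c (Nat.cast_nonneg m), mul_assoc]
    _ ≤ √c * (δ / √(1 - δ ^ 2) * l1 (restr h Sᶜ)) := by
        gcongr √c * ?_
        exact hRIP.sqrt_mul_l2_restr_le hK hA
    _ = √c * (δ / √(1 - δ ^ 2)) * l1 (restr h Sᶜ) := (mul_assoc _ _ _).symm

theorem stmt7 {n p k : ℕ} (A : Matrix (Fin n) (Fin p) ℝ) (δ : ℝ)
    (hRIP : RIP A (2 * k) δ) :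
    ∀ h : Fin p → ℝ, A.mulVec h = 0 →
      ∀ S : Finset (Fin p), S.card ≤ k →
        l1 (restr h S) ≤
          Real.sqrt (4 * (1 + 5 * δ - 4 * δ ^ 2) / ((1 - δ) * (32 - 25 * δ))) *
            l1 (restr h Sᶜ) := by
  intro h hA S hS
  have hsharp := stmt7_general (m := k) (c := 1) hRIP hA (S := S) (by omega) (by simpa using hS)
  rw [Real.sqrt_one, one_mul] at hsharp
  exact hsharp.trans
    (mul_le_mul_of_nonneg_right (div_sqrt_one_sub_sq_le hRIP.1 hRIP.2.1) (l1_nonneg _))
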